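/- For every t with 0 < t < √3/2 and every δ > 0, the polynomially convex hull of S_t ∩ B̄(0;δ) contains a nonempty open ball centred at the origin: there exists ρ > 0 such that B(0;ρ) is contained in the hull of S_t ∩ B̄(0;δ). -/

import Mathlib

open Complex ComplexConjugate

/-- The polynomially convex hull of a set `K ⊆ ℂ²`. -/
def polyHull2 (K : Set (ℂ × ℂ)) : Set (ℂ × ℂ) :=
  { z | ∀ p : MvPolynomial (Fin 2) ℂ,
      ‖MvPolynomial.eval (fun i => if i = 0 then z.1 else z.2) p‖ ≤
        sSup ((fun w : ℂ × ℂ =>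
          ‖MvPolynomial.eval (fun i => if i = 0 then w.1 else w.2) p‖) '' K) }

/-- A set `K ⊆ ℂ²` is polynomially convex if it equals its polynomially convex hull. -/
def PolyConvex2 (K : Set (ℂ × ℂ)) : Prop := polyHull2 K = K

/-- The closed Euclidean ball of radius `r` centred at the origin in `ℂ²`. -/
def eClosedBall (r : ℝ) : Set (ℂ × ℂ) := { z | ‖z.1‖ ^ 2 + ‖z.2‖ ^ 2 ≤ r ^ 2 }

/-- The open Euclidean ball of radius `r` centred at the origin in `ℂ²`. -/
def eOpenBall (r : ℝ) : Set (ℂ × ℂ) := { z | ‖z.1‖ ^ 2 + ‖z.2‖ ^ 2 < r ^ 2 }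

/-- The surface `S_t = {(z, z²z̄ + t z z̄² + (t²/3) z̄³) : z ∈ ℂ}`. -/
def Sset (t : ℝ) : Set (ℂ × ℂ) :=
  { zw | ∃ z : ℂ, zw = (z, z ^ 2 * conj z + (t : ℂ) * z * (conj z) ^ 2
      + ((t : ℂ) ^ 2 / 3) * (conj z) ^ 3) }

/-!
On `S_t` one has `3 t w = (z + t z̄)³ - z³`. Hence, with `u = 1 + x`, a pair `(z, w)` with
`|x| = t`, `z² x ≥ 0` and `3 t w = z³ (u³ - 1)` lies on `S_t`. For `t < √3 / 2` the closed discs of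
radius `t` about the cube roots of unity are disjoint. If `E` is a holomorphic function on their
exterior (including `u = ∞`) invariant under `u ↦ ω u`, and `E / (u² + u + 1) > 0` on the
circle `|u - 1| = t`, then `z² (u³ - 1) = E`, `3 t w = z E` is a double cover of the exterior,
branched at `∞`, whose boundary lies on `S_t`.

Writing `E` as the exponential of a sum over the three rotations, the positivity condition becomes
a cohomological equation for the transfer operator of the two maps `x ↦ t² / (α (1 + x) - 1)` with
`α ≠ 1`, `α³ = 1`, solved by a Neumann series. The operator contracts exactly for `t < √3 / 2`: the
powers `P₀, P₁, P₂` of `u` with respect to the three circles satisfy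
`P₁ P₂ + P₀ (P₁ + P₂) = 3 (S² - |u|²)`, `S = |u|² + 1 - t²`.

As `S_t` is invariant under `(z, w) ↦ (c z, c³ w)` for real `c`, all small rescalings of this
double cover lie in the hull. Near `u = ∞`, discs with boundary in these rescalings fill a
neighbourhood of a circle `{0} × {|w| = r}`, hence of the origin by the maximum principle.
-/

section Hull

/-- The value of a polynomial in two variables at a point of `ℂ²`. -/
noncomputable def evalPair (p : MvPolynomial (Fin 2) ℂ) (z : ℂ × ℂ) : ℂ :=
  MvPolynomial.eval (fun i => if i = 0 then z.1 else z.2) p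

theorem continuous_evalPair (p : MvPolynomial (Fin 2) ℂ) : Continuous (evalPair p) := by
  have hpt : Continuous fun (z : ℂ × ℂ) (i : Fin 2) => if i = 0 then z.1 else z.2 :=
    continuous_pi fun i => by split_ifs <;> fun_prop
  exact (MvPolynomial.continuous_eval p).comp hpt

theorem evalPair_pow (p : MvPolynomial (Fin 2) ℂ) (n : ℕ) (z : ℂ × ℂ) :
    evalPair (p ^ n) z = evalPair p z ^ n :=
  map_pow _ p n

theorem subset_polyHull2 {K : Set (ℂ × ℂ)} (hK : Bornology.IsBounded K) : K ⊆ polyHull2 K := by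
  intro z hz p
  have hbdd : BddAbove ((fun w => ‖evalPair p w‖) '' closure K) :=
    (hK.isCompact_closure.image (continuous_evalPair p).norm).bddAbove
  exact le_csSup (hbdd.mono (Set.image_mono subset_closure)) ⟨z, hz, rfl⟩

theorem sSup_norm_evalPair_nonneg (p : MvPolynomial (Fin 2) ℂ) (K : Set (ℂ × ℂ)) :
    0 ≤ sSup ((fun w => ‖evalPair p w‖) '' K) := by
  refine Real.sSup_nonneg ?_
  rintro _ ⟨w, -, rfl⟩
  exact norm_nonneg _

theorem sSup_norm_evalPair_pow_le {K : Set (ℂ × ℂ)} (hK : Bornology.IsBounded K)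
    (p : MvPolynomial (Fin 2) ℂ) (n : ℕ) :
    sSup ((fun w => ‖evalPair (p ^ n) w‖) '' K) ≤ sSup ((fun w => ‖evalPair p w‖) '' K) ^ n := by
  have h0 := sSup_norm_evalPair_nonneg p K
  refine Real.sSup_le ?_ (by positivity)
  rintro _ ⟨w, hw, rfl⟩
  simp only [evalPair_pow, norm_pow]
  gcongr
  exact subset_polyHull2 hK hw p

theorem diffContOnCl_evalPair (p : MvPolynomial (Fin 2) ℂ) {f g : ℂ → ℂ} {U : Set ℂ}
    (hf : DiffContOnCl ℂ f U) (hg : DiffContOnCl ℂ g U) :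
    DiffContOnCl ℂ (fun q => evalPair p (f q, g q)) U := by
  induction p using MvPolynomial.induction_on with
  | C a => simpa [evalPair] using diffContOnCl_const
  | add p₁ p₂ h₁ h₂ =>
    simp only [evalPair, map_add] at h₁ h₂ ⊢
    exact h₁.add h₂
  | mul_X p i hp =>
    have hi : DiffContOnCl ℂ (fun q => if i = 0 then f q else g q) U := by
      split_ifs <;> assumption
    simpa [evalPair] using hp.smul hi

theorem mem_polyHull2_of_disc {K : Set (ℂ × ℂ)} {f g : ℂ → ℂ} {U : Set ℂ}
    (hU : Bornology.IsBounded U) (hf : DiffContOnCl ℂ f U) (hg : DiffContOnCl ℂ g U)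
    (hfr : ∀ q ∈ frontier U, (f q, g q) ∈ polyHull2 K) {q : ℂ} (hq : q ∈ closure U) :
    (f q, g q) ∈ polyHull2 K := fun p =>
  norm_le_of_forall_mem_frontier_norm_le hU (diffContOnCl_evalPair p hf hg)
    (fun _ hq => hfr _ hq p) hq

theorem exists_evalPair_mul_eq_add_mul (p : MvPolynomial (Fin 2) ℂ) {A B D : ℂ → ℂ} {U : Set ℂ}
    (hA : DiffContOnCl ℂ A U) (hB : DiffContOnCl ℂ B U) (hD : DiffContOnCl ℂ D U) :
    ∃ F G : ℂ → ℂ, DiffContOnCl ℂ F U ∧ DiffContOnCl ℂ G U ∧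
      ∀ q θ, θ ^ 2 = D q → evalPair p (θ * A q, θ * B q) = F q + θ * G q := by
  induction p using MvPolynomial.induction_on with
  | C a =>
    exact ⟨fun _ => a, fun _ => 0, diffContOnCl_const, diffContOnCl_const, by simp [evalPair]⟩
  | add p₁ p₂ h₁ h₂ =>
    obtain ⟨F₁, G₁, hF₁, hG₁, h₁⟩ := h₁
    obtain ⟨F₂, G₂, hF₂, hG₂, h₂⟩ := h₂
    refine ⟨_, _, hF₁.add hF₂, hG₁.add hG₂, fun q θ hθ => ?_⟩
    simp only [evalPair, map_add, Pi.add_apply] at h₁ h₂ ⊢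
    linear_combination h₁ q θ hθ + h₂ q θ hθ
  | mul_X p i hp =>
    obtain ⟨F, G, hF, hG, h⟩ := hp
    let X : ℂ → ℂ := if i = 0 then A else B
    have hX : DiffContOnCl ℂ X U := by unfold X; split_ifs <;> assumption
    refine ⟨_, _, (hD.smul hG).smul hX, hF.smul hX, fun q θ hθ => ?_⟩
    have hcoord : (if i = 0 then θ * A q else θ * B q) = θ * X q := by
      unfold X; split_ifs <;> rfl
    simp only [evalPair, map_mul, MvPolynomial.eval_X, smul_eq_mul, hcoord] at h ⊢
    rw [h q θ hθ, ← hθ]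
    ring

theorem norm_le_and_norm_le_of_norm_add_sub {E : Type*} [NormedAddCommGroup E] [NormedSpace ℝ E]
    {x y : E} {C : ℝ} (hadd : ‖x + y‖ ≤ C) (hsub : ‖x - y‖ ≤ C) : ‖x‖ ≤ C ∧ ‖y‖ ≤ C := by
  have h₁ := norm_add_le (x + y) (x - y)
  have h₂ := norm_sub_le (x + y) (x - y)
  rw [show x + y + (x - y) = (2 : ℝ) • x by module, norm_smul, Real.norm_two] at h₁
  rw [show x + y - (x - y) = (2 : ℝ) • y by module, norm_smul, Real.norm_two] at h₂
  constructor <;> linarith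

theorem norm_add_sqrt_mul_le {F G D : ℂ → ℂ} {U : Set ℂ} {C : ℝ} (hU : Bornology.IsBounded U)
    (hF : DiffContOnCl ℂ F U) (hG : DiffContOnCl ℂ G U) (hD : DiffContOnCl ℂ D U) (hC : 0 ≤ C)
    (hfr : ∀ q ∈ frontier U, ∀ θ, θ ^ 2 = D q → ‖F q + θ * G q‖ ≤ C)
    {q θ : ℂ} (hq : q ∈ closure U) (hθ : θ ^ 2 = D q) : ‖F q + θ * G q‖ ≤ 2 * C := by
  have hfr' : ∀ q ∈ frontier U, ‖F q‖ ≤ C ∧ ‖D q * G q ^ 2‖ ≤ C ^ 2 := by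
    intro q hq
    obtain ⟨θ, hθ⟩ := IsAlgClosed.exists_pow_nat_eq (D q) two_pos
    obtain ⟨hFq, hGq⟩ := norm_le_and_norm_le_of_norm_add_sub (hfr q hq θ hθ)
      (by simpa [sub_eq_add_neg] using hfr q hq (-θ) (by rw [neg_sq, hθ]))
    rw [← hθ, ← mul_pow, norm_pow]
    exact ⟨hFq, by gcongr⟩
  have hFq := norm_le_of_forall_mem_frontier_norm_le hU hF (fun q hq => (hfr' q hq).1) hq
  have hGq : ‖D q * G q ^ 2‖ ≤ C ^ 2 :=
    norm_le_of_forall_mem_frontier_norm_le hU (f := fun q => D q * G q ^ 2)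
      (by simpa [pow_two] using hD.smul (hG.smul hG)) (fun q hq => (hfr' q hq).2) hq
  rw [← hθ, ← mul_pow, norm_pow, sq_le_sq₀ (norm_nonneg _) hC] at hGq
  linarith [norm_add_le (F q) (θ * G q)]

theorem le_of_forall_pow_le_mul_pow {a b C : ℝ} (hb : 0 ≤ b)
    (h : ∀ n : ℕ, a ^ n ≤ C * b ^ n) : a ≤ b := by
  rcases hb.eq_or_lt with rfl | hb
  · simpa using h 1
  by_contra! hba
  obtain ⟨n, hn⟩ := pow_unbounded_of_one_lt C ((one_lt_div hb).2 hba)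
  rw [div_pow, lt_div_iff₀ (by positivity)] at hn
  exact (h n).not_gt hn

/-- The maximum principle for the double cover `θ² = D q`: since `F + θ G` is two-valued it only
gives a bound with the constant `2`, which the powers `p ^ n` remove. -/
theorem mem_polyHull2_of_double_cover {K : Set (ℂ × ℂ)} {A B D : ℂ → ℂ} {U : Set ℂ}
    (hK : Bornology.IsBounded K) (hU : Bornology.IsBounded U)
    (hA : DiffContOnCl ℂ A U) (hB : DiffContOnCl ℂ B U) (hD : DiffContOnCl ℂ D U)
    (hfr : ∀ q ∈ frontier U, ∀ θ, θ ^ 2 = D q → (θ * A q, θ * B q) ∈ polyHull2 K)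
    {q θ : ℂ} (hq : q ∈ closure U) (hθ : θ ^ 2 = D q) : (θ * A q, θ * B q) ∈ polyHull2 K := by
  have two_mul_bound : ∀ p : MvPolynomial (Fin 2) ℂ, ‖evalPair p (θ * A q, θ * B q)‖ ≤
      2 * sSup ((fun w => ‖evalPair p w‖) '' K) := by
    intro p
    obtain ⟨F, G, hF, hG, hFG⟩ := exists_evalPair_mul_eq_add_mul p hA hB hD
    rw [hFG q θ hθ]
    refine norm_add_sqrt_mul_le hU hF hG hD (sSup_norm_evalPair_nonneg p K) ?_ hq hθ
    intro q hq θ hθ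
    rw [← hFG q θ hθ]
    exact hfr q hq θ hθ p
  intro p
  refine le_of_forall_pow_le_mul_pow (C := 2) (sSup_norm_evalPair_nonneg p K) fun n => ?_
  have hpow := (two_mul_bound (p ^ n)).trans
    (mul_le_mul_of_nonneg_left (sSup_norm_evalPair_pow_le hK p n) zero_le_two)
  rwa [evalPair_pow, norm_pow] at hpow

theorem polyHull2_mem_nhds_zero {K : Set (ℂ × ℂ)} {r : ℝ} (hr : 0 < r)
    (h : ∀ w ∈ Metric.sphere (0 : ℂ) r, polyHull2 K ∈ nhds ((0 : ℂ), w)) :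
    polyHull2 K ∈ nhds (0 : ℂ × ℂ) := by
  have hev : ∀ᶠ z in nhds (0 : ℂ), ∀ w ∈ Metric.sphere (0 : ℂ) r, (z, w) ∈ polyHull2 K :=
    (isCompact_sphere (0 : ℂ) r).eventually_forall_of_forall_eventually h
  rw [← Prod.mk_zero_zero, nhds_prod_eq]
  filter_upwards [Filter.prod_mem_prod hev (Metric.ball_mem_nhds (0 : ℂ) hr)]
  rintro ⟨z, w⟩ ⟨hz, hw⟩
  refine mem_polyHull2_of_disc (f := fun _ => z) (g := id) Metric.isBounded_ball
    diffContOnCl_const differentiable_id.diffContOnCl (fun w' hw' => ?_) (subset_closure hw)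
  rw [frontier_ball _ hr.ne'] at hw'
  exact hz w' hw'

end Hull

section EuclideanBalls

theorem isBounded_eClosedBall (r : ℝ) : Bornology.IsBounded (eClosedBall r) := by
  refine (Metric.isBounded_closedBall (x := (0 : ℂ × ℂ)) (r := |r|)).subset fun z hz => ?_
  have hz : ‖z.1‖ ^ 2 + ‖z.2‖ ^ 2 ≤ r ^ 2 := hz
  rw [mem_closedBall_zero_iff, Prod.norm_def, max_le_iff]
  constructor <;> refine le_of_sq_le_sq ?_ (abs_nonneg r) <;> rw [sq_abs] <;>
    linarith [sq_nonneg ‖z.1‖, sq_nonneg ‖z.2‖]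

theorem exists_forall_smul_mem_eClosedBall {δ : ℝ} (hδ : 0 < δ) (M : ℝ) :
    ∃ c₀ > 0, ∀ c : ℝ, |c| ≤ c₀ → ∀ z w : ℂ, ‖z‖ ^ 2 + ‖w‖ ^ 2 ≤ M →
      (c * z, c ^ 3 * w) ∈ eClosedBall δ := by
  have hpos : 0 < δ + |M| + 1 := by positivity
  refine ⟨δ / (δ + |M| + 1), by positivity, fun c hc z w hzw => ?_⟩
  have hc1 : |c| ≤ 1 := hc.trans ((div_le_one hpos).2 (by linarith [abs_nonneg M]))
  change ‖c * z‖ ^ 2 + ‖c ^ 3 * w‖ ^ 2 ≤ δ ^ 2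
  calc ‖c * z‖ ^ 2 + ‖c ^ 3 * w‖ ^ 2 = |c| ^ 2 * (‖z‖ ^ 2 + |c| ^ 4 * ‖w‖ ^ 2) := by
        simp only [norm_mul, norm_pow, norm_real, Real.norm_eq_abs]
        ring
    _ ≤ |c| ^ 2 * (‖z‖ ^ 2 + 1 * ‖w‖ ^ 2) := by
        gcongr
        exact pow_le_one₀ (abs_nonneg c) hc1
    _ ≤ (δ / (δ + |M| + 1)) ^ 2 * |M| := by
        gcongr
        linarith [le_abs_self M]
    _ ≤ δ ^ 2 := by
        rw [div_pow, div_mul_eq_mul_div, div_le_iff₀ (by positivity)]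
        gcongr
        nlinarith [abs_nonneg M]

theorem exists_eOpenBall_subset {s : Set (ℂ × ℂ)} (hs : s ∈ nhds 0) :
    ∃ ρ > 0, eOpenBall ρ ⊆ s := by
  obtain ⟨ρ, hρ, hball⟩ := Metric.mem_nhds_iff.1 hs
  refine ⟨ρ, hρ, fun z hz => hball ?_⟩
  have hz : ‖z.1‖ ^ 2 + ‖z.2‖ ^ 2 < ρ ^ 2 := hz
  rw [mem_ball_zero_iff, Prod.norm_def, max_lt_iff]
  constructor <;> refine lt_of_pow_lt_pow_left₀ 2 hρ.le ?_ <;>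
    linarith [sq_nonneg ‖z.1‖, sq_nonneg ‖z.2‖]

end EuclideanBalls

section TransferOperator

variable {ι : Type*} {s : Finset ι} {φ : ι → ℂ → ℂ} {f g : ℂ → ℂ} {U : Set ℂ} {W : ℂ → ℝ} {r : ℝ}

/-- The transfer operator `f ↦ ∑ᵢ φᵢ' · (f ∘ φᵢ)` of a finite family of maps. -/
noncomputable def transferOp (s : Finset ι) (φ : ι → ℂ → ℂ) (f : ℂ → ℂ) (x : ℂ) : ℂ :=
  ∑ i ∈ s, deriv (φ i) x * f (φ i x)

/-- The Neumann series `∑ₙ Lⁿ g` of the transfer operator `L`, which solves `f = g + L f`. -/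
noncomputable def neumannSum (s : Finset ι) (φ : ι → ℂ → ℂ) (g : ℂ → ℂ) (x : ℂ) : ℂ :=
  ∑' n : ℕ, (transferOp s φ)^[n] g x

/-- The holomorphic maps `φᵢ` send `U` into itself, and their transfer operator has norm at most
`r` on functions bounded by multiples of the weight `W`. -/
structure IsTransferContraction (s : Finset ι) (φ : ι → ℂ → ℂ) (U : Set ℂ) (W : ℂ → ℝ) (r : ℝ) :
    Prop where
  differentiableOn : ∀ i ∈ s, DifferentiableOn ℂ (φ i) U
  mapsTo : ∀ i ∈ s, Set.MapsTo (φ i) U U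
  sum_le : ∀ x ∈ U, ∑ i ∈ s, ‖deriv (φ i) x‖ * W (φ i x) ≤ r * W x

namespace IsTransferContraction

theorem differentiableOn_iterate (h : IsTransferContraction s φ U W r) (hU : IsOpen U)
    (hg : DifferentiableOn ℂ g U) (n : ℕ) : DifferentiableOn ℂ ((transferOp s φ)^[n] g) U := by
  induction n with
  | zero => exact hg
  | succ n ih =>
    rw [Function.iterate_succ_apply']
    exact DifferentiableOn.fun_sum fun i hi =>
      ((h.differentiableOn i hi).deriv hU).mul (ih.comp (h.differentiableOn i hi) (h.mapsTo i hi))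

theorem norm_iterate_le (h : IsTransferContraction s φ U W r) (hr : 0 ≤ r)
    (hg : ∀ x ∈ U, ‖g x‖ ≤ W x) (n : ℕ) {x : ℂ} (hx : x ∈ U) :
    ‖(transferOp s φ)^[n] g x‖ ≤ r ^ n * W x := by
  induction n generalizing x with
  | zero => simpa using hg x hx
  | succ n ih =>
    rw [Function.iterate_succ_apply']
    calc ‖∑ i ∈ s, deriv (φ i) x * (transferOp s φ)^[n] g (φ i x)‖
        ≤ ∑ i ∈ s, ‖deriv (φ i) x‖ * (r ^ n * W (φ i x)) := by
          refine norm_sum_le_of_le _ fun i hi => ?_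
          rw [norm_mul]
          gcongr
          exact ih (h.mapsTo i hi hx)
      _ = r ^ n * ∑ i ∈ s, ‖deriv (φ i) x‖ * W (φ i x) := by
          rw [Finset.mul_sum]
          exact Finset.sum_congr rfl fun i _ => by ring
      _ ≤ r ^ n * (r * W x) := by gcongr; exact h.sum_le x hx
      _ = r ^ (n + 1) * W x := by ring

theorem summable_iterate (h : IsTransferContraction s φ U W r) (hr0 : 0 ≤ r) (hr1 : r < 1)
    (hg : ∀ x ∈ U, ‖g x‖ ≤ W x) {x : ℂ} (hx : x ∈ U) :
    Summable fun n => (transferOp s φ)^[n] g x :=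
  .of_norm_bounded ((summable_geometric_of_lt_one hr0 hr1).mul_right (W x))
    fun n => h.norm_iterate_le hr0 hg n hx

theorem differentiableOn_neumannSum (h : IsTransferContraction s φ U W r) (hr0 : 0 ≤ r)
    (hr1 : r < 1) (hU : IsOpen U) (hW : ContinuousOn W U) (hg : DifferentiableOn ℂ g U)
    (hgW : ∀ x ∈ U, ‖g x‖ ≤ W x) : DifferentiableOn ℂ (neumannSum s φ g) U := by
  intro p hp
  have hV : IsOpen (U ∩ W ⁻¹' Set.Iio (W p + 1)) := hW.isOpen_inter_preimage hU isOpen_Iio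
  have hdiff : DifferentiableOn ℂ (neumannSum s φ g) (U ∩ W ⁻¹' Set.Iio (W p + 1)) :=
    differentiableOn_tsum_of_summable_norm
      ((summable_geometric_of_lt_one hr0 hr1).mul_right (W p + 1))
      (fun n => (h.differentiableOn_iterate hU hg n).mono Set.inter_subset_left) hV
      fun n x hx => (h.norm_iterate_le hr0 hgW n hx.1).trans
        (mul_le_mul_of_nonneg_left hx.2.le (pow_nonneg hr0 n))
  exact (hdiff.differentiableAt (hV.mem_nhds ⟨hp, lt_add_one (W p)⟩)).differentiableWithinAt

theorem neumannSum_eq (h : IsTransferContraction s φ U W r) (hr0 : 0 ≤ r) (hr1 : r < 1)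
    (hg : ∀ x ∈ U, ‖g x‖ ≤ W x) {x : ℂ} (hx : x ∈ U) :
    neumannSum s φ g x = g x + transferOp s φ (neumannSum s φ g) x := by
  rw [neumannSum, (h.summable_iterate hr0 hr1 hg hx).tsum_eq_zero_add]
  simp only [Function.iterate_succ_apply', Function.iterate_zero, id_eq, transferOp]
  rw [Summable.tsum_finsetSum fun i hi =>
    (h.summable_iterate hr0 hr1 hg (h.mapsTo i hi hx)).mul_left _]
  simp only [tsum_mul_left, neumannSum]

end IsTransferContraction

theorem deriv_conj_of_forall (h : ∀ x, f (conj x) = conj (g x)) (x : ℂ) :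
    deriv f (conj x) = conj (deriv g x) := by
  have hf : f = conj ∘ g ∘ conj := by
    ext x
    rw [Function.comp_apply, Function.comp_apply, ← h, conj_conj]
  rw [hf, deriv_conj_conj, Function.comp_apply, Function.comp_apply, conj_conj]

theorem logDeriv_conj (h : ∀ x, f (conj x) = conj (f x)) (x : ℂ) :
    logDeriv f (conj x) = conj (logDeriv f x) := by
  rw [logDeriv_apply, logDeriv_apply, h, deriv_conj_of_forall h, map_div₀]

theorem transferOp_conj {σ : ι → ι} (hσs : ∀ i ∈ s, σ i ∈ s) (hσ : ∀ i ∈ s, σ (σ i) = i)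
    (hφ : ∀ i x, φ i (conj x) = conj (φ (σ i) x)) (hf : ∀ x, f (conj x) = conj (f x)) (x : ℂ) :
    transferOp s φ f (conj x) = conj (transferOp s φ f x) := by
  rw [transferOp, transferOp, map_sum]
  refine Finset.sum_nbij' σ σ hσs hσs hσ hσ fun i _ => ?_
  rw [hφ, hf, map_mul, deriv_conj_of_forall (hφ i)]

theorem neumannSum_conj {σ : ι → ι} (hσs : ∀ i ∈ s, σ i ∈ s) (hσ : ∀ i ∈ s, σ (σ i) = i)
    (hφ : ∀ i x, φ i (conj x) = conj (φ (σ i) x)) (hg : ∀ x, g (conj x) = conj (g x)) (x : ℂ) :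
    neumannSum s φ g (conj x) = conj (neumannSum s φ g x) := by
  have hiter : ∀ (n : ℕ) (x : ℂ),
      (transferOp s φ)^[n] g (conj x) = conj ((transferOp s φ)^[n] g x) := by
    intro n
    induction n with
    | zero => exact hg
    | succ n ih =>
      rw [Function.iterate_succ_apply']
      exact transferOp_conj hσs hσ hφ ih
  simp only [neumannSum, conj_tsum, hiter]

theorem exists_primitive_conj {R : ℝ} (hR : 0 < R)
    (hf : DifferentiableOn ℂ f (Metric.ball 0 R)) (hfc : ∀ x, f (conj x) = conj (f x)) :
    ∃ m : ℂ → ℂ, (∀ x ∈ Metric.ball 0 R, HasDerivAt m (f x) x) ∧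
      ∀ x ∈ Metric.ball 0 R, m (conj x) = conj (m x) := by
  obtain ⟨m, hm0, hm⟩ := hf.isExactOn_ball.with_val_at 0 0
  refine ⟨m, hm, fun x hx => ?_⟩
  have hconj_mem : ∀ x ∈ Metric.ball (0 : ℂ) R, conj x ∈ Metric.ball (0 : ℂ) R := by simp
  have hm' : ∀ x ∈ Metric.ball (0 : ℂ) R, HasDerivAt (conj ∘ m ∘ conj) (f x) x := by
    intro x hx
    simpa [hfc] using (hm _ (hconj_mem x hx)).conj_conj
  have heq : Set.EqOn (conj ∘ m ∘ conj) m (Metric.ball 0 R) :=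
    Metric.isOpen_ball.eqOn_of_deriv_eq (convex_ball _ _).isPreconnected
      (fun x hx => (hm' x hx).differentiableAt.differentiableWithinAt)
      (fun x hx => (hm x hx).differentiableAt.differentiableWithinAt)
      (fun x hx => (hm' x hx).deriv.trans (hm x hx).deriv.symm)
      (Metric.mem_ball_self hR) (by simp [hm0])
  simpa using congrArg conj (heq hx)

theorem hasDerivAt_mul_exp_sub_sum {m N : ℂ → ℂ} {x : ℂ} (hN : DifferentiableAt ℂ N x)
    (hN0 : N x ≠ 0) (hφ : ∀ i ∈ s, DifferentiableAt ℂ (φ i) x) (hm : HasDerivAt m (f x) x)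
    (hmφ : ∀ i ∈ s, HasDerivAt m (f (φ i x)) (φ i x))
    (hf : f x = -logDeriv N x + transferOp s φ f x) :
    HasDerivAt (fun x => N x * exp (m x - ∑ i ∈ s, m (φ i x))) 0 x := by
  have hsum : HasDerivAt (fun x => ∑ i ∈ s, m (φ i x)) (transferOp s φ f x) x :=
    (HasDerivAt.fun_sum fun i hi => (hmφ i hi).comp x (hφ i hi).hasDerivAt).congr_deriv
      (Finset.sum_congr rfl fun i _ => mul_comm _ _)
  refine (hN.hasDerivAt.mul (hm.sub hsum).cexp).congr_deriv ?_
  rw [hf, logDeriv_apply]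
  field_simp
  ring

/-- The cohomological equation `N · exp (m - ∑ᵢ m ∘ φᵢ) = c` is solved by integrating the Neumann
series of `-N' / N`. -/
theorem IsTransferContraction.exists_exp_eq {R : ℝ} {N : ℂ → ℂ} {σ : ι → ι}
    (h : IsTransferContraction s φ (Metric.ball 0 R) W r) (hr0 : 0 ≤ r) (hr1 : r < 1) (hR : 0 < R)
    (hW : ContinuousOn W (Metric.ball 0 R)) (hσs : ∀ i ∈ s, σ i ∈ s) (hσ : ∀ i ∈ s, σ (σ i) = i)
    (hφ : ∀ i x, φ i (conj x) = conj (φ (σ i) x)) (hN : Differentiable ℂ N)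
    (hN0 : ∀ x ∈ Metric.ball 0 R, N x ≠ 0) (hNc : ∀ x, N (conj x) = conj (N x))
    (hNW : ∀ x ∈ Metric.ball 0 R, ‖logDeriv N x‖ ≤ W x) :
    ∃ (m : ℂ → ℂ) (c : ℂ), c ≠ 0 ∧ DifferentiableOn ℂ m (Metric.ball 0 R) ∧
      (∀ x ∈ Metric.ball 0 R, m (conj x) = conj (m x)) ∧
      ∀ x ∈ Metric.ball 0 R, N x * exp (m x - ∑ i ∈ s, m (φ i x)) = c := by
  set g : ℂ → ℂ := fun x => -logDeriv N x with hg
  have hgd : DifferentiableOn ℂ g (Metric.ball 0 R) := fun x hx =>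
    ((hN.deriv x).div (hN x) (hN0 x hx)).neg.differentiableWithinAt
  have hgW : ∀ x ∈ Metric.ball 0 R, ‖g x‖ ≤ W x := by simpa [hg] using hNW
  have hgc : ∀ x, g (conj x) = conj (g x) := fun x => by simp only [hg, logDeriv_conj hNc, map_neg]
  obtain ⟨m, hm, hmc⟩ := exists_primitive_conj hR
    (h.differentiableOn_neumannSum hr0 hr1 Metric.isOpen_ball hW hgd hgW)
    (neumannSum_conj hσs hσ hφ hgc)
  have hconst : ∀ x ∈ Metric.ball 0 R,
      HasDerivAt (fun x => N x * exp (m x - ∑ i ∈ s, m (φ i x))) 0 x := fun x hx =>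
    hasDerivAt_mul_exp_sub_sum (hN x) (hN0 x hx)
      (fun i hi => (h.differentiableOn i hi).differentiableAt (Metric.isOpen_ball.mem_nhds hx))
      (hm x hx) (fun i hi => hm _ (h.mapsTo i hi hx)) (h.neumannSum_eq hr0 hr1 hgW hx)
  refine ⟨m, N 0 * exp (m 0 - ∑ i ∈ s, m (φ i 0)),
    mul_ne_zero (hN0 0 (Metric.mem_ball_self hR)) (exp_ne_zero _),
    fun x hx => (hm x hx).differentiableAt.differentiableWithinAt, hmc, fun x hx => ?_⟩
  exact Metric.isOpen_ball.is_const_of_deriv_eq_zero (convex_ball _ _).isPreconnected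
    (fun x hx => (hconst x hx).differentiableAt.differentiableWithinAt)
    (fun x hx => (hconst x hx).deriv) hx (Metric.mem_ball_self hR)

end TransferOperator

section CubeRoots

/-- The three complex cube roots of unity. -/
noncomputable def cubeRoots : Finset ℂ := Polynomial.nthRootsFinset 3 1

variable {α β : ℂ}

theorem mem_cubeRoots : α ∈ cubeRoots ↔ α ^ 3 = 1 :=
  Polynomial.mem_nthRootsFinset three_pos 1

theorem one_mem_cubeRoots : 1 ∈ cubeRoots :=
  mem_cubeRoots.2 (one_pow 3)

theorem mul_mem_cubeRoots (hα : α ∈ cubeRoots) (hβ : β ∈ cubeRoots) : α * β ∈ cubeRoots := by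
  rw [mem_cubeRoots] at *
  rw [mul_pow, hα, hβ, one_mul]

theorem norm_of_mem_cubeRoots (hα : α ∈ cubeRoots) : ‖α‖ = 1 :=
  norm_eq_one_of_pow_eq_one (mem_cubeRoots.1 hα) three_ne_zero

theorem ne_zero_of_mem_cubeRoots (hα : α ∈ cubeRoots) : α ≠ 0 :=
  norm_ne_zero_iff.1 (by simp [norm_of_mem_cubeRoots hα])

theorem conj_mem_cubeRoots_erase_one (hα : α ∈ cubeRoots.erase 1) :
    conj α ∈ cubeRoots.erase 1 := by
  rw [Finset.mem_erase, mem_cubeRoots] at *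
  rw [← map_pow, hα.2, map_one, Ne, map_eq_one_iff _ (RingHom.injective _)]
  exact ⟨hα.1, rfl⟩

theorem exists_cubeRoots_erase_one_eq :
    ∃ h : ℝ, h ^ 2 = 3 / 4 ∧ (⟨-1 / 2, h⟩ : ℂ) ≠ ⟨-1 / 2, -h⟩ ∧
      cubeRoots.erase 1 = {⟨-1 / 2, h⟩, ⟨-1 / 2, -h⟩} := by
  have hsq : (√3 / 2) ^ 2 = 3 / 4 := by rw [div_pow, Real.sq_sqrt zero_le_three]; norm_num
  refine ⟨√3 / 2, hsq, ?_, ?_⟩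
  · have hpos : 0 < √3 := by positivity
    simp only [ne_eq, Complex.ext_iff, true_and]
    linarith
  ext α
  have hfactor : α ^ 3 - 1 = (α - 1) * ((α - ⟨-1 / 2, √3 / 2⟩) * (α - ⟨-1 / 2, -(√3 / 2)⟩)) := by
    have hadd : (⟨-1 / 2, √3 / 2⟩ : ℂ) + ⟨-1 / 2, -(√3 / 2)⟩ = -1 := by
      apply Complex.ext <;> simp only [add_re, add_im, neg_re, neg_im, one_re, one_im] <;> ring
    have hmul : (⟨-1 / 2, √3 / 2⟩ : ℂ) * ⟨-1 / 2, -(√3 / 2)⟩ = 1 := by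
      apply Complex.ext <;> simp only [mul_re, mul_im, one_re, one_im] <;> linarith
    linear_combination (α - 1) * α * hadd - (α - 1) * hmul
  rw [Finset.mem_erase, mem_cubeRoots, Finset.mem_insert, Finset.mem_singleton, ← sub_eq_zero,
    hfactor, mul_eq_zero, mul_eq_zero, sub_eq_zero, sub_eq_zero, sub_eq_zero]
  refine ⟨fun ⟨hne, h⟩ => h.resolve_left hne, fun h => ⟨?_, Or.inr h⟩⟩
  rintro rfl
  rcases h with h | h <;> norm_num [Complex.ext_iff] at h

theorem norm_sub_one_sq_of_mem_cubeRoots_erase_one (hα : α ∈ cubeRoots.erase 1) :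
    ‖α - 1‖ ^ 2 = 3 := by
  obtain ⟨h, hh, -, heq⟩ := exists_cubeRoots_erase_one_eq
  simp only [heq, Finset.mem_insert, Finset.mem_singleton] at hα
  rcases hα with rfl | rfl <;> rw [Complex.sq_norm, normSq_apply] <;>
    simp only [sub_re, sub_im, one_re, one_im] <;> linarith

variable {x : ℂ} {τ : ℝ}

theorem lt_norm_mul_one_add_sub_one (hα : α ∈ cubeRoots.erase 1) (hτ : 4 * τ ^ 2 < 3)
    (hx : ‖x‖ ≤ τ) : τ < ‖α * (1 + x) - 1‖ := by
  by_contra! h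
  have htri : ‖α - 1‖ ≤ τ + τ := by
    calc ‖α - 1‖ = ‖(α * (1 + x) - 1) - α * x‖ := by ring_nf
      _ ≤ ‖α * (1 + x) - 1‖ + ‖α * x‖ := norm_sub_le _ _
      _ ≤ τ + τ := by
        rw [norm_mul, norm_of_mem_cubeRoots (Finset.mem_of_mem_erase hα), one_mul]
        gcongr
  have hsq : ‖α - 1‖ ^ 2 ≤ (τ + τ) ^ 2 := by gcongr
  rw [norm_sub_one_sq_of_mem_cubeRoots_erase_one hα] at hsq
  linarith

theorem sq_add_three_mul_add_three_ne_zero (hτ : 4 * τ ^ 2 < 3) (hx : ‖x‖ ≤ τ) :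
    x ^ 2 + 3 * x + 3 ≠ 0 := by
  intro h
  have hmem : 1 + x ∈ cubeRoots.erase 1 := by
    rw [Finset.mem_erase, mem_cubeRoots]
    refine ⟨fun h1 => ?_, by linear_combination x * h⟩
    have hx0 : x = 0 := by linear_combination h1
    norm_num [hx0] at h
  have h3 := norm_sub_one_sq_of_mem_cubeRoots_erase_one hmem
  rw [add_sub_cancel_left] at h3
  have hxτ : ‖x‖ ^ 2 ≤ τ ^ 2 := by gcongr
  nlinarith

end CubeRoots

section Contraction

variable {x α : ℂ} {t τ C : ℝ}

/-- For `u = a + b i` the three factors are, up to sign, the powers of `u` with respect to the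
circles of radius `τ` about the cube roots of unity. -/
theorem power_mul_add_le (hτ : 4 * τ ^ 2 < 3) {a b h S : ℝ} (hh : h ^ 2 = 3 / 4)
    (hS : S = a ^ 2 + b ^ 2 + 1 - τ ^ 2) :
    (2 * a - S) * ((S + a + 2 * h * b) + (S + a - 2 * h * b)) ≤
      (7 + 12 * τ ^ 2) / 16 * ((S + a + 2 * h * b) * (S + a - 2 * h * b)) := by
  have hdisc : (3 - 4 * τ ^ 2) * S ^ 2 ≤ 4 * (S ^ 2 - (a ^ 2 + b ^ 2)) := by
    have hs : 0 < 1 - τ ^ 2 := by linarith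
    have hamgm : 4 * (1 - τ ^ 2) * (a ^ 2 + b ^ 2) ≤ S ^ 2 := by
      rw [hS]
      nlinarith [sq_nonneg (a ^ 2 + b ^ 2 - (1 - τ ^ 2))]
    have hpos : 0 ≤ τ ^ 2 * (3 - 4 * τ ^ 2) * S ^ 2 :=
      mul_nonneg (mul_nonneg (sq_nonneg τ) (by linarith)) (sq_nonneg S)
    refine le_of_mul_le_mul_left ?_ hs
    linarith
  have hpowers : (S + a + 2 * h * b) * (S + a - 2 * h * b) -
      (2 * a - S) * ((S + a + 2 * h * b) + (S + a - 2 * h * b)) =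
        3 * (S ^ 2 - (a ^ 2 + b ^ 2)) := by
    linear_combination -4 * b ^ 2 * hh
  have haS : a ^ 2 ≤ S ^ 2 := by nlinarith [sq_nonneg b, sq_nonneg S]
  have hprod : (S + a + 2 * h * b) * (S + a - 2 * h * b) ≤ 4 * S ^ 2 := by
    nlinarith [sq_nonneg b, sq_nonneg (S - a)]
  linarith [mul_le_mul_of_nonneg_left hprod (sub_nonneg.2 hτ.le)]

theorem norm_mul_one_add_sub_one_sq {h : ℝ} (hh : h ^ 2 = 3 / 4) (x : ℂ) :
    ‖(⟨-1 / 2, h⟩ : ℂ) * (1 + x) - 1‖ ^ 2 =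
      (1 + x.re) ^ 2 + x.im ^ 2 + 1 + (1 + x.re) + 2 * h * x.im := by
  simp only [Complex.sq_norm, normSq_apply, sub_re, sub_im, mul_re, mul_im, add_re, add_im,
    one_re, one_im]
  linear_combination ((1 + x.re) ^ 2 + x.im ^ 2) * hh

theorem sum_inv_power_le (hτ : 4 * τ ^ 2 < 3) (hx : ‖x‖ < τ) :
    ∑ α ∈ cubeRoots.erase 1, (‖α * (1 + x) - 1‖ ^ 2 - τ ^ 2)⁻¹ ≤
      (7 + 12 * τ ^ 2) / 16 * (τ ^ 2 - ‖x‖ ^ 2)⁻¹ := by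
  have hpos : ∀ α ∈ cubeRoots.erase 1, 0 < ‖α * (1 + x) - 1‖ ^ 2 - τ ^ 2 := fun α hα =>
    sub_pos.2 (pow_lt_pow_left₀ (lt_norm_mul_one_add_sub_one hα hτ hx.le)
      ((norm_nonneg x).trans hx.le) two_ne_zero)
  have hpos₀ : 0 < τ ^ 2 - ‖x‖ ^ 2 :=
    sub_pos.2 (pow_lt_pow_left₀ hx (norm_nonneg x) two_ne_zero)
  obtain ⟨h, hh, hne, heq⟩ := exists_cubeRoots_erase_one_eq
  have hh' : (-h) ^ 2 = 3 / 4 := by rwa [neg_sq]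
  have hnorm₀ : τ ^ 2 - ‖x‖ ^ 2 =
      2 * (1 + x.re) - ((1 + x.re) ^ 2 + x.im ^ 2 + 1 - τ ^ 2) := by
    rw [Complex.sq_norm, normSq_apply]
    ring
  have hbound := power_mul_add_le hτ hh (a := 1 + x.re) (b := x.im) rfl
  simp only [heq, Finset.mem_insert, Finset.mem_singleton, forall_eq_or_imp, forall_eq,
    norm_mul_one_add_sub_one_sq hh, norm_mul_one_add_sub_one_sq hh'] at hpos
  rw [heq, Finset.sum_pair hne, norm_mul_one_add_sub_one_sq hh, norm_mul_one_add_sub_one_sq hh',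
    inv_add_inv hpos.1.ne' hpos.2.ne', ← div_eq_mul_inv,
    div_le_div_iff₀ (mul_pos hpos.1 hpos.2) hpos₀, hnorm₀]
  linarith

/-- In the coordinate `x = u - 1`, the rotation `u ↦ α u` followed by the inversion of the plane
that exchanges the two sides of the circle `|u - 1| = t`. -/
noncomputable def invRot (t : ℝ) (α x : ℂ) : ℂ := t ^ 2 / (α * (1 + x) - 1)

theorem invRot_conj (t : ℝ) (α x : ℂ) : invRot t α (conj x) = conj (invRot t (conj α) x) := by
  simp [invRot]

theorem hasDerivAt_invRot (t : ℝ) (h : α * (1 + x) - 1 ≠ 0) :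
    HasDerivAt (invRot t α) (-(t ^ 2 * α) / (α * (1 + x) - 1) ^ 2) x := by
  exact ((hasDerivAt_const x ((t : ℂ) ^ 2)).div
    ((((hasDerivAt_id x).const_add 1).const_mul α).sub_const 1) h).congr_deriv (by simp)

theorem norm_invRot_sq (t : ℝ) (α x : ℂ) :
    ‖invRot t α x‖ ^ 2 = t ^ 4 / ‖α * (1 + x) - 1‖ ^ 2 := by
  rw [invRot, norm_div, norm_pow, norm_real, Real.norm_eq_abs, sq_abs, div_pow]
  ring

theorem mapsTo_invRot (ht : 0 ≤ t) (htτ : t ≤ τ) (hτ : 4 * τ ^ 2 < 3) (hα : α ∈ cubeRoots.erase 1) :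
    Set.MapsTo (invRot t α) (Metric.ball 0 τ) (Metric.ball 0 τ) := by
  intro x hx
  rw [mem_ball_zero_iff] at *
  have hlt := lt_norm_mul_one_add_sub_one hα hτ hx.le
  have hτ0 : 0 < τ := (norm_nonneg x).trans_lt hx
  rw [invRot, norm_div, norm_pow, norm_real, Real.norm_of_nonneg ht, div_lt_iff₀ (hτ0.trans hlt)]
  nlinarith

theorem norm_deriv_invRot_mul_le (ht : 0 ≤ t) (htτ : t ≤ τ) (hτ : 4 * τ ^ 2 < 3)
    (hα : α ∈ cubeRoots.erase 1) (hx : ‖x‖ < τ) :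
    ‖deriv (invRot t α) x‖ * (τ ^ 2 - ‖invRot t α x‖ ^ 2)⁻¹ ≤
      (‖α * (1 + x) - 1‖ ^ 2 - τ ^ 2)⁻¹ := by
  have hlt := lt_norm_mul_one_add_sub_one hα hτ hx.le
  have hτ0 : 0 < τ := (norm_nonneg x).trans_lt hx
  rw [(hasDerivAt_invRot t (norm_pos_iff.1 (hτ0.trans hlt))).deriv, norm_invRot_sq, norm_div,
    norm_neg, norm_mul, norm_pow, norm_pow, norm_of_mem_cubeRoots (Finset.mem_of_mem_erase hα),
    norm_real, Real.norm_of_nonneg ht, mul_one]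
  set d := ‖α * (1 + x) - 1‖
  have hd : τ ^ 2 < d ^ 2 := by gcongr
  have ht2 : t ^ 2 ≤ τ ^ 2 := by gcongr
  have ht4 : t ^ 4 ≤ τ ^ 4 := by gcongr
  have hpos : 0 < τ ^ 2 * d ^ 2 - t ^ 4 := by
    linarith [mul_pos (pow_pos hτ0 2) (sub_pos.2 hd)]
  rw [← div_eq_mul_inv, div_div, mul_sub, mul_div_cancel₀ _ (pow_ne_zero 2 (hτ0.trans hlt).ne'),
    mul_comm (d ^ 2), inv_eq_one_div, div_le_div_iff₀ hpos (sub_pos.2 hd)]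
  linarith [mul_nonneg (sub_nonneg.2 ht2) (add_nonneg (sq_nonneg d) (sq_nonneg t))]

theorem isTransferContraction_invRot (ht : 0 ≤ t) (htτ : t ≤ τ) (hτ : 4 * τ ^ 2 < 3) (hC : 0 ≤ C) :
    IsTransferContraction (cubeRoots.erase 1) (invRot t) (Metric.ball 0 τ)
      (fun x => C * (τ ^ 2 - ‖x‖ ^ 2)⁻¹) ((7 + 12 * τ ^ 2) / 16) where
  differentiableOn α hα x hx := by
    rw [mem_ball_zero_iff] at hx
    exact (hasDerivAt_invRot t (norm_pos_iff.1 (((norm_nonneg x).trans_lt hx).trans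
      (lt_norm_mul_one_add_sub_one hα hτ hx.le)))).differentiableAt.differentiableWithinAt
  mapsTo α hα := mapsTo_invRot ht htτ hτ hα
  sum_le x hx := by
    rw [mem_ball_zero_iff] at hx
    calc ∑ α ∈ cubeRoots.erase 1, ‖deriv (invRot t α) x‖ * (C * (τ ^ 2 - ‖invRot t α x‖ ^ 2)⁻¹)
        = C * ∑ α ∈ cubeRoots.erase 1,
            ‖deriv (invRot t α) x‖ * (τ ^ 2 - ‖invRot t α x‖ ^ 2)⁻¹ := by
          rw [Finset.mul_sum]
          exact Finset.sum_congr rfl fun α _ => by ring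
      _ ≤ C * ∑ α ∈ cubeRoots.erase 1, (‖α * (1 + x) - 1‖ ^ 2 - τ ^ 2)⁻¹ := by
          gcongr with α hα
          exact norm_deriv_invRot_mul_le ht htτ hτ hα hx
      _ ≤ C * ((7 + 12 * τ ^ 2) / 16 * (τ ^ 2 - ‖x‖ ^ 2)⁻¹) := by
          gcongr
          exact sum_inv_power_le hτ hx
      _ = (7 + 12 * τ ^ 2) / 16 * (C * (τ ^ 2 - ‖x‖ ^ 2)⁻¹) := by ring

theorem exists_exp_sub_sum_invRot (ht0 : 0 ≤ t) (ht1 : t < √3 / 2) :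
    ∃ τ > t, ∃ (m : ℂ → ℂ) (c : ℂ), c ≠ 0 ∧ DifferentiableOn ℂ m (Metric.ball 0 τ) ∧
      (∀ x ∈ Metric.ball 0 τ, m (conj x) = conj (m x)) ∧ ∀ x ∈ Metric.ball 0 τ,
        (x ^ 2 + 3 * x + 3) * exp (m x - ∑ α ∈ cubeRoots.erase 1, m (invRot t α x)) = c := by
  obtain ⟨τ, htτ, hτ1⟩ := exists_between ht1
  have hτ : 4 * τ ^ 2 < 3 := by
    nlinarith [Real.sq_sqrt zero_le_three]
  have hτ0 : 0 < τ := ht0.trans_lt htτ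
  have hNd : Differentiable ℂ fun x : ℂ => x ^ 2 + 3 * x + 3 := by fun_prop
  obtain ⟨C, hC⟩ : ∃ C, ∀ x ∈ Metric.closedBall (0 : ℂ) τ,
      ‖logDeriv (fun x : ℂ => x ^ 2 + 3 * x + 3) x‖ ≤ C := by
    refine (isCompact_closedBall 0 τ).exists_bound_of_continuousOn
      (hNd.contDiff.continuous_deriv_one.continuousOn.div hNd.continuous.continuousOn fun x hx =>
        sq_add_three_mul_add_three_ne_zero hτ (mem_closedBall_zero_iff.1 hx))
  have hC0 : 0 ≤ C := (norm_nonneg _).trans (hC 0 (Metric.mem_closedBall_self hτ0.le))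
  refine ⟨τ, htτ, (isTransferContraction_invRot ht0 htτ.le hτ
    (C := C * τ ^ 2) (by positivity)).exists_exp_eq (σ := conj) (by positivity) (by linarith) hτ0 ?_
    (fun α hα => conj_mem_cubeRoots_erase_one hα) (fun α _ => conj_conj α)
    (invRot_conj t) hNd (fun x hx => sq_add_three_mul_add_three_ne_zero hτ
      (mem_ball_zero_iff.1 hx).le) (fun x => by simp [map_ofNat]) fun x hx => ?_⟩
  · refine continuousOn_const.mul (ContinuousOn.inv₀ (by fun_prop) fun x hx => ?_)
    rw [mem_ball_zero_iff] at hx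
    exact (sub_pos.2 (by gcongr)).ne'
  · have hpos : 0 < τ ^ 2 - ‖x‖ ^ 2 := by
      rw [mem_ball_zero_iff] at hx
      exact sub_pos.2 (by gcongr)
    rw [← div_eq_mul_inv, le_div_iff₀ hpos]
    have hCx := hC x (Metric.ball_subset_closedBall hx)
    gcongr
    linarith [sq_nonneg ‖x‖]

end Contraction

section Surface

variable {t R : ℝ} {x z w : ℂ}

theorem mem_Sset_of_sq_mul_eq (ht : 0 < t) (hR : 0 ≤ R) (hx : ‖x‖ = t) (hz : z ^ 2 * x = R) :
    (z, z ^ 3 * ((1 + x) ^ 3 - 1) / (3 * t)) ∈ Sset t := by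
  have ht' : (t : ℂ) ≠ 0 := ofReal_ne_zero.2 ht.ne'
  have hconj : z * x = t * conj z := by
    rcases eq_or_ne z 0 with rfl | hz0
    · simp
    refine mul_left_cancel₀ hz0 ?_
    have hnorm : ‖z‖ ^ 2 * t = R := by
      rw [← hx, ← norm_pow, ← norm_mul, hz, norm_real, Real.norm_of_nonneg hR]
    calc z * (z * x) = ((‖z‖ ^ 2 * t : ℝ) : ℂ) := by rw [hnorm, ← hz]; ring
      _ = z * conj z * t := by rw [mul_conj, normSq_eq_norm_sq]; push_cast; rfl
      _ = z * (t * conj z) := by ring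
  refine ⟨z, Prod.ext rfl ?_⟩
  dsimp only
  rw [div_eq_iff (by simpa using ht')]
  linear_combination (3 * z ^ 2 + 3 * z * (z * x + t * conj z) +
    ((z * x) ^ 2 + z * x * (t * conj z) + (t * conj z) ^ 2)) * hconj

theorem smul_mem_Sset (h : (z, w) ∈ Sset t) (c : ℝ) : (c * z, c ^ 3 * w) ∈ Sset t := by
  obtain ⟨z', hz'⟩ := h
  obtain ⟨rfl, rfl⟩ := Prod.mk.inj hz'
  refine ⟨c * z, Prod.ext rfl ?_⟩
  simp only [map_mul, conj_ofReal]
  ring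

end Surface

section DiscComplement

variable {t τ : ℝ} {α β q x : ℂ} {m : ℂ → ℂ}

/-- The set of `u ∈ ℂ ∪ {∞}` with `|α u - 1| > t` for all cube roots of unity `α`, in the coordinate
`q = t² / (u - 1)`, in which it is bounded and `u = ∞` becomes `q = 0`. -/
def discComplement (t : ℝ) : Set ℂ :=
  {q | ∀ α ∈ cubeRoots, t * ‖q‖ < ‖α * (q + t ^ 2) - q‖}

/-- The rotation `u ↦ α u` in the coordinate `q = t² / (u - 1)`. -/
noncomputable def outerRot (t : ℝ) (α q : ℂ) : ℂ := t ^ 2 * q / (α * (q + t ^ 2) - q)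

/-- The sum of `m` over the orbit of the point with coordinate `q` under the rotations `u ↦ α u`. -/
noncomputable def orbitSum (t : ℝ) (m : ℂ → ℂ) (q : ℂ) : ℂ := ∑ α ∈ cubeRoots, m (outerRot t α q)

theorem isOpen_discComplement (t : ℝ) : IsOpen (discComplement t) := by
  simp only [discComplement, Set.ofPred_forall]
  exact isOpen_biInter_finset fun α _ => isOpen_lt (by fun_prop) (by fun_prop)

theorem discComplement_subset_ball (ht : 0 < t) : discComplement t ⊆ Metric.ball 0 t := by
  intro q hq
  have h := hq 1 one_mem_cubeRoots
  rw [one_mul, add_sub_cancel_left, norm_pow, norm_real, Real.norm_of_nonneg ht.le, sq] at h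
  exact mem_ball_zero_iff.2 (lt_of_mul_lt_mul_left h ht.le)

theorem zero_mem_discComplement (ht : 0 < t) : 0 ∈ discComplement t := fun α hα => by
  simpa [norm_of_mem_cubeRoots hα] using pow_pos ht 2

theorem mul_norm_le_of_mem_closure (hq : q ∈ closure (discComplement t)) (hα : α ∈ cubeRoots) :
    t * ‖q‖ ≤ ‖α * (q + t ^ 2) - q‖ :=
  closure_minimal (t := {q | t * ‖q‖ ≤ ‖α * (q + t ^ 2) - q‖}) (fun _ hq => (hq α hα).le)
    (isClosed_le (by fun_prop) (by fun_prop)) hq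

theorem exists_mul_norm_eq_of_mem_frontier (hq : q ∈ frontier (discComplement t)) :
    ∃ α ∈ cubeRoots, t * ‖q‖ = ‖α * (q + t ^ 2) - q‖ := by
  rw [(isOpen_discComplement t).frontier_eq] at hq
  obtain ⟨α, hα, hle⟩ : ∃ α ∈ cubeRoots, ‖α * (q + t ^ 2) - q‖ ≤ t * ‖q‖ := by
    simpa [discComplement] using hq.2
  exact ⟨α, hα, (mul_norm_le_of_mem_closure hq.1 hα).antisymm hle⟩

theorem mul_add_sub_ne_zero (ht : 0 < t) (hq : q ∈ closure (discComplement t))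
    (hα : α ∈ cubeRoots) : α * (q + t ^ 2) - q ≠ 0 := by
  intro h
  have hle := mul_norm_le_of_mem_closure hq hα
  rw [h, norm_zero] at hle
  have hq0 : q = 0 := norm_le_zero_iff.1 (nonpos_of_mul_nonpos_right hle ht)
  simp [hq0, ne_zero_of_mem_cubeRoots hα, ht.ne'] at h

theorem cube_sub_cube_ne_zero (ht : 0 < t) (hq : q ∈ closure (discComplement t)) :
    (q + t ^ 2) ^ 3 - q ^ 3 ≠ 0 := by
  intro h
  have hq2 : q + (t : ℂ) ^ 2 ≠ 0 := by
    intro h0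
    have hq0 : q = 0 := by simpa [h0] using h
    simp [hq0, ht.ne'] at h0
  have hmem : q / (q + t ^ 2) ∈ cubeRoots := by
    rw [mem_cubeRoots, div_pow, div_eq_one_iff_eq (pow_ne_zero 3 hq2)]
    exact (sub_eq_zero.1 h).symm
  exact mul_add_sub_ne_zero ht hq hmem (by rw [div_mul_cancel₀ _ hq2, sub_self])

theorem norm_outerRot_le (ht : 0 < t) (hq : q ∈ closure (discComplement t))
    (hα : α ∈ cubeRoots) : ‖outerRot t α q‖ ≤ t := by
  rw [outerRot, norm_div, norm_mul, norm_pow, norm_real, Real.norm_of_nonneg ht.le,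
    div_le_iff₀ (norm_pos_iff.2 (mul_add_sub_ne_zero ht hq hα)), sq, mul_assoc]
  exact mul_le_mul_of_nonneg_left (mul_norm_le_of_mem_closure hq hα) ht.le

theorem outerRot_outerRot (ht : t ≠ 0) (hβ : β * (q + t ^ 2) - q ≠ 0) :
    outerRot t α (outerRot t β q) = outerRot t (α * β) q := by
  have ht' : (t : ℂ) ≠ 0 := ofReal_ne_zero.2 ht
  have hden : α * (outerRot t β q + t ^ 2) - outerRot t β q =
      t ^ 2 * (α * β * (q + t ^ 2) - q) / (β * (q + t ^ 2) - q) := by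
    rw [outerRot]
    field_simp
    ring
  rw [outerRot, hden, outerRot, outerRot]
  field_simp

theorem orbitSum_outerRot (ht : 0 < t) (hq : q ∈ closure (discComplement t))
    (hβ : β ∈ cubeRoots) : orbitSum t m (outerRot t β q) = orbitSum t m q := by
  have hβ3 : β ^ 3 = 1 := mem_cubeRoots.1 hβ
  refine Finset.sum_nbij' (· * β) (· * (β * β)) (fun α hα => mul_mem_cubeRoots hα hβ)
    (fun α hα => mul_mem_cubeRoots hα (mul_mem_cubeRoots hβ hβ)) (fun α _ => ?_) (fun α _ => ?_)
    fun α _ => by rw [outerRot_outerRot ht.ne' (mul_add_sub_ne_zero ht hq hβ)]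
  all_goals linear_combination α * hβ3

theorem differentiableOn_orbitSum (ht : 0 < t) (htτ : t < τ)
    (hm : DifferentiableOn ℂ m (Metric.ball 0 τ)) :
    DifferentiableOn ℂ (orbitSum t m) (closure (discComplement t)) := by
  refine DifferentiableOn.fun_sum fun α hα => hm.comp (fun q hq => ?_) fun q hq =>
    mem_ball_zero_iff.2 ((norm_outerRot_le ht hq hα).trans_lt htτ)
  have hden := mul_add_sub_ne_zero ht hq hα
  unfold outerRot
  fun_prop (disch := assumption)

theorem outerRot_one (ht : t ≠ 0) (q : ℂ) : outerRot t 1 q = q := by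
  have ht' : (t : ℂ) ≠ 0 := ofReal_ne_zero.2 ht
  rw [outerRot, one_mul, add_sub_cancel_left, mul_div_cancel_left₀ _ (pow_ne_zero 2 ht')]

theorem outerRot_eq_invRot (ht : t ≠ 0) (hq : q * x = t ^ 2) :
    outerRot t α q = invRot t α x := by
  have hx : q ≠ 0 := left_ne_zero_of_mul (hq ▸ pow_ne_zero 2 (ofReal_ne_zero.2 ht))
  rw [outerRot, invRot, ← hq, mul_comm q x, mul_comm (x * q), show α * (q + x * q) - q =
    q * (α * (1 + x) - 1) by ring, mul_div_mul_left _ _ hx, mul_comm]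

theorem orbitSum_conj (ht : 0 < t) (hx : ‖x‖ = t) (hm : m (conj x) = conj (m x)) :
    orbitSum t m (conj x) = conj (m x) + ∑ α ∈ cubeRoots.erase 1, m (invRot t α x) := by
  have hq : conj x * x = t ^ 2 := by rw [mul_comm, mul_conj, normSq_eq_norm_sq, hx]; push_cast; rfl
  rw [orbitSum, ← Finset.add_sum_erase _ _ one_mem_cubeRoots, outerRot_one ht.ne', hm]
  simp only [outerRot_eq_invRot ht.ne' hq]

/-- On the circle, `conj (outerRot t β q)` is the coordinate `u - 1` of the rotated point. -/
theorem conj_outerRot_mul (ht : 0 < t) (hq : q ∈ closure (discComplement t)) (hβ : β ∈ cubeRoots)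
    (heq : t * ‖q‖ = ‖β * (q + t ^ 2) - q‖) :
    ‖outerRot t β q‖ = t ∧ q * (1 + conj (outerRot t β q)) = β * (q + t ^ 2) := by
  have hden := mul_add_sub_ne_zero ht hq hβ
  have hnorm : ‖outerRot t β q‖ = t := by
    rw [outerRot, norm_div, norm_mul, norm_pow, norm_real, Real.norm_of_nonneg ht.le,
      div_eq_iff (norm_ne_zero_iff.2 hden), sq, mul_assoc, heq]
  refine ⟨hnorm, ?_⟩
  have hq' : outerRot t β q ≠ 0 := norm_ne_zero_iff.1 (by rw [hnorm]; exact ht.ne')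
  have hconj : outerRot t β q * conj (outerRot t β q) = t ^ 2 := by
    rw [mul_conj, normSq_eq_norm_sq, hnorm, ofReal_pow]
  have hmul : outerRot t β q * (β * (q + t ^ 2) - q) = t ^ 2 * q := div_mul_cancel₀ _ hden
  refine mul_left_cancel₀ hq' ?_
  linear_combination q * hconj - hmul

theorem mem_Sset_of_mem_frontier {E : ℂ → ℂ} {c θ : ℂ} (ht : 0 < t) (ht3 : 4 * t ^ 2 < 3)
    (hm : ∀ x, ‖x‖ = t → m (conj x) = conj (m x))
    (hmc : ∀ x, ‖x‖ = t →
      (x ^ 2 + 3 * x + 3) * exp (m x - ∑ α ∈ cubeRoots.erase 1, m (invRot t α x)) = c)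
    (hq : q ∈ frontier (discComplement t)) (hE : E q = c * exp (orbitSum t m q))
    (hθ : θ ^ 2 * ((q + t ^ 2) ^ 3 - q ^ 3) = q * E q) :
    (θ * q, θ * q * E q / (3 * t)) ∈ Sset t := by
  have hqc := frontier_subset_closure hq
  obtain ⟨β, hβ, heq⟩ := exists_mul_norm_eq_of_mem_frontier hq
  obtain ⟨hnorm, hrot⟩ := conj_outerRot_mul ht hqc hβ heq
  set x : ℂ := conj (outerRot t β q) with hx
  have hxt : ‖x‖ = t := by rw [hx, norm_conj, hnorm]
  have hN : x ^ 2 + 3 * x + 3 ≠ 0 := sq_add_three_mul_add_three_ne_zero ht3 hxt.le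
  obtain ⟨R, hR, hEx⟩ : ∃ R : ℝ, 0 ≤ R ∧ E q = R * (x ^ 2 + 3 * x + 3) := by
    refine ⟨Real.exp (2 * (m x).re), (Real.exp_pos _).le, ?_⟩
    have hqx : outerRot t β q = conj x := by rw [hx, conj_conj]
    rw [hE, ← orbitSum_outerRot ht hqc hβ, hqx, orbitSum_conj ht hxt (hm x hxt), ← hmc x hxt,
      ofReal_exp, ← add_conj, mul_assoc, ← exp_add, mul_comm]
    ring_nf
  have hcube : q ^ 3 * (1 + x) ^ 3 = (q + t ^ 2) ^ 3 := by
    rw [← mul_pow, hrot, mul_pow, mem_cubeRoots.1 hβ, one_mul]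
  have hq0 : q ≠ 0 := by
    intro h0
    simp [h0, ne_zero_of_mem_cubeRoots hβ, ht.ne'] at hrot
  have hzu : (θ * q) ^ 2 * ((1 + x) ^ 3 - 1) = E q := by
    refine mul_left_cancel₀ hq0 ?_
    linear_combination hθ + θ ^ 2 * hcube
  have hz : (θ * q) ^ 2 * x = R := by
    refine mul_right_cancel₀ hN ?_
    linear_combination hzu + hEx
  have hmem := mem_Sset_of_sq_mul_eq ht hR hxt hz
  rwa [show (θ * q) ^ 3 * ((1 + x) ^ 3 - 1) = θ * q * E q by linear_combination (θ * q) * hzu]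
    at hmem

theorem exists_double_cover_frontier_subset_Sset (ht0 : 0 < t) (ht1 : t < √3 / 2) :
    ∃ E D : ℂ → ℂ, DifferentiableOn ℂ E (closure (discComplement t)) ∧
      DifferentiableOn ℂ D (closure (discComplement t)) ∧ E 0 ≠ 0 ∧ D 0 ≠ 0 ∧
      ∀ q ∈ frontier (discComplement t), ∀ θ, θ ^ 2 = q * D q →
        (θ * q, θ * (q * E q)) ∈ Sset t := by
  obtain ⟨τ, htτ, m, c, hc, hmd, hm, hmc⟩ := exists_exp_sub_sum_invRot ht0.le ht1
  have ht3 : 4 * t ^ 2 < 3 := by nlinarith [Real.sq_sqrt zero_le_three]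
  have ht' : (t : ℂ) ≠ 0 := ofReal_ne_zero.2 ht0.ne'
  have hball : ∀ x : ℂ, ‖x‖ = t → x ∈ Metric.ball 0 τ := fun x hx => by simpa [hx] using htτ
  have hE := ((differentiableOn_orbitSum ht0 htτ hmd).cexp).const_mul c
  have hD : DifferentiableOn ℂ (fun q : ℂ => (q + t ^ 2) ^ 3 - q ^ 3)
    (closure (discComplement t)) := by fun_prop
  refine ⟨_, _, hE.div_const (3 * t), hE.div hD fun q hq => cube_sub_cube_ne_zero ht0 hq,
    ?_, ?_, ?_⟩
  · simp [hc, ht']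
  · simp [hc, ht']
  · intro q hq θ hθ
    have hcube := cube_sub_cube_ne_zero ht0 (frontier_subset_closure hq)
    have hmem := mem_Sset_of_mem_frontier ht0 ht3 (fun x hx => hm x (hball x hx))
      (fun x hx => hmc x (hball x hx)) hq (E := fun q => c * exp (orbitSum t m q)) rfl (θ := θ)
      (by rw [hθ, Pi.div_apply, mul_div_assoc', div_mul_cancel₀ _ hcube])
    convert hmem using 2
    ring

theorem exists_forall_smul_mem_polyHull2 (ht0 : 0 < t) (ht1 : t < √3 / 2) {δ : ℝ} (hδ : 0 < δ) :
    ∃ (E D : ℂ → ℂ) (c₀ : ℝ), AnalyticAt ℂ E 0 ∧ AnalyticAt ℂ D 0 ∧ E 0 ≠ 0 ∧ D 0 ≠ 0 ∧ 0 < c₀ ∧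
      ∀ᶠ q in nhds 0, ∀ θ, θ ^ 2 = q * D q → ∀ c : ℝ, |c| ≤ c₀ →
        (c * (θ * q), c ^ 3 * (θ * (q * E q))) ∈ polyHull2 (Sset t ∩ eClosedBall δ) := by
  obtain ⟨E, D, hE, hD, hE0, hD0, hS⟩ := exists_double_cover_frontier_subset_Sset ht0 ht1
  have hΩ : Bornology.IsBounded (discComplement t) :=
    Metric.isBounded_ball.subset (discComplement_subset_ball ht0)
  have hK : Bornology.IsBounded (Sset t ∩ eClosedBall δ) :=
    (isBounded_eClosedBall δ).subset Set.inter_subset_right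
  obtain ⟨M, hM⟩ : ∃ M, ∀ q ∈ closure (discComplement t),
      ‖q * D q * q ^ 2‖ + ‖q * D q * (q * E q) ^ 2‖ ≤ M := by
    have hcont : ContinuousOn (fun q => ‖q * D q * q ^ 2‖ + ‖q * D q * (q * E q) ^ 2‖)
        (closure (discComplement t)) := by
      have := hE.continuousOn
      have := hD.continuousOn
      fun_prop
    exact (hΩ.isCompact_closure.bddAbove_image hcont).imp fun M hM q hq => hM ⟨q, hq, rfl⟩
  obtain ⟨c₀, hc₀, hball⟩ := exists_forall_smul_mem_eClosedBall hδ M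
  have hnhds := (isOpen_discComplement t).mem_nhds (zero_mem_discComplement ht0)
  have hnhds' := Filter.mem_of_superset hnhds subset_closure
  refine ⟨E, D, c₀, hE.analyticAt hnhds', hD.analyticAt hnhds', hE0, hD0, hc₀, ?_⟩
  filter_upwards [hnhds] with q hq θ hθ c hc
  have hfr : ∀ q ∈ frontier (discComplement t), ∀ θ, θ ^ 2 = q * D q →
      (θ * (c * q), θ * (c ^ 3 * (q * E q))) ∈ polyHull2 (Sset t ∩ eClosedBall δ) := by
    intro q hq θ hθ
    have hbound : ‖θ * q‖ ^ 2 + ‖θ * (q * E q)‖ ^ 2 ≤ M := by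
      simpa only [← norm_pow, mul_pow, hθ] using hM q (frontier_subset_closure hq)
    simpa only [mul_left_comm] using
      subset_polyHull2 hK ⟨smul_mem_Sset (hS q hq θ hθ) c, hball c hc _ _ hbound⟩
  have hmem := mem_polyHull2_of_double_cover hK hΩ (A := fun q => c * q)
    (B := fun q => c ^ 3 * (q * E q)) (D := fun q => q * D q)
    (DifferentiableOn.diffContOnCl (by fun_prop)) (DifferentiableOn.diffContOnCl (by fun_prop))
    (DifferentiableOn.diffContOnCl (by fun_prop)) hfr (subset_closure hq) hθ
  simpa only [mul_left_comm] using hmem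

end DiscComplement

section Filling

open Filter Metric Topology

theorem exists_analyticAt_pow_eq {D : ℂ → ℂ} {z : ℂ} {n : ℕ} (hn : n ≠ 0)
    (hD : AnalyticAt ℂ D z) (hz : D z ≠ 0) :
    ∃ σ : ℂ → ℂ, AnalyticAt ℂ σ z ∧ ∀ q, σ q ^ n = D q := by
  obtain ⟨s, hs⟩ := IsAlgClosed.exists_pow_nat_eq (D z) (Nat.pos_of_ne_zero hn)
  refine ⟨fun q => s * (D q / D z) ^ ((n : ℂ)⁻¹), analyticAt_const.mul
    ((hD.div analyticAt_const hz).cpow analyticAt_const ?_), fun q => ?_⟩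
  · simp [hz, one_mem_slitPlane]
  · rw [mul_pow, hs, cpow_nat_inv_pow _ hn, mul_div_cancel₀ _ hz]

theorem map_nhds_fst_mul_prodMk {𝕜 : Type*} [NontriviallyNormedField 𝕜] [CompleteSpace 𝕜]
    {h W : 𝕜 × 𝕜 → 𝕜} {h' W' : 𝕜 × 𝕜 →L[𝕜] 𝕜} {v d : 𝕜} (hh : HasStrictFDerivAt h h' (0, v))
    (hW : HasStrictFDerivAt W W' (0, v)) (h0 : h (0, v) ≠ 0)
    (hd : HasDerivAt (fun y => W (0, y)) d v) (hd0 : d ≠ 0) :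
    map (fun x => (x.1 * h x, W x)) (𝓝 (0, v)) = 𝓝 (0, W (0, v)) := by
  have hW'd : W' (0, 1) = d :=
    (hW.hasFDerivAt.comp_hasDerivAt v
      ((hasDerivAt_const v (0 : 𝕜)).prodMk (hasDerivAt_id v))).unique hd
  have hsplit : ∀ x y, W' (x, y) = x * W' (1, 0) + y * d := by
    intro x y
    rw [← hW'd, ← smul_eq_mul, ← smul_eq_mul, ← map_smul, ← map_smul, ← map_add]
    simp
  refine ((hasStrictFDerivAt_fst.mul hh).prodMk hW).map_nhds_eq_of_surj ?_ |>.trans (by simp)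
  refine LinearMap.range_eq_top.2 ?_
  rintro ⟨x, y⟩
  refine ⟨(x / h (0, v), (y - x / h (0, v) * W' (1, 0)) / d), Prod.ext ?_ ?_⟩
  · change 0 * h' _ + h (0, v) * (x / h (0, v)) = x
    rw [zero_mul, zero_add, mul_div_cancel₀ _ h0]
  · change W' _ = y
    rw [hsplit, div_mul_cancel₀ _ hd0, add_sub_cancel]

theorem exists_sq_eq_mul_eq_one_add_div_two {p : ℂ} (hp : ‖p‖ = 1) :
    ∃ (s : ℂ) (c : ℝ), s ^ 2 = p ∧ |c| ≤ 1 ∧ c * s = (1 + p) / 2 := by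
  obtain ⟨s, hs⟩ := IsAlgClosed.exists_pow_nat_eq p two_pos
  have hs1 : ‖s‖ = 1 := by
    rwa [← hs, norm_pow, pow_eq_one_iff_of_nonneg (norm_nonneg s) two_ne_zero] at hp
  refine ⟨s, s.re, hs, hs1 ▸ abs_re_le_norm s, ?_⟩
  have hconj : s * conj s = 1 := by rw [mul_conj, normSq_eq_norm_sq, hs1]; simp
  rw [re_eq_add_conj, ← hs]
  linear_combination hconj / 2

/-- For fixed `v`, the holomorphic disc `‖p‖ ≤ 1` attached to the union over real `|c| ≤ c₀` of the
scaled double covers `(c θ q, c³ θ q E q)`, `θ² = q σ(q)²`: on `‖p‖ = 1` take `q = p v²` and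
`c = c₀ Re √p`, for which `c √p = c₀ (1 + p) / 2`. The argument is `(p, v)`. -/
noncomputable def fillingMap (c₀ : ℝ) (σ E : ℂ → ℂ) (x : ℂ × ℂ) : ℂ × ℂ :=
  (x.1 * (c₀ / 2 * (1 + x.1) * x.2 ^ 3 * σ (x.1 * x.2 ^ 2)),
    (c₀ / 2 * (1 + x.1)) ^ 3 * x.2 ^ 3 * σ (x.1 * x.2 ^ 2) * E (x.1 * x.2 ^ 2))

variable {K : Set (ℂ × ℂ)} {E σ : ℂ → ℂ} {c₀ r : ℝ} {p v : ℂ}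

theorem fillingMap_mem_polyHull2_of_norm_eq_one (hc₀ : 0 ≤ c₀)
    (h : ∀ q ∈ ball 0 r, ∀ θ, θ ^ 2 = q * σ q ^ 2 → ∀ c : ℝ, |c| ≤ c₀ →
      (c * (θ * q), c ^ 3 * (θ * (q * E q))) ∈ polyHull2 K)
    (hp : ‖p‖ = 1) (hv : ‖v‖ ^ 2 < r) : fillingMap c₀ σ E (p, v) ∈ polyHull2 K := by
  obtain ⟨s, c, hs, hc, hcs⟩ := exists_sq_eq_mul_eq_one_add_div_two hp
  have hmem := h (p * v ^ 2) (by simpa [hp] using hv) (s * v * σ (p * v ^ 2))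
    (by rw [← hs]; ring) (c₀ * c)
    (by rw [abs_mul, abs_of_nonneg hc₀]; exact mul_le_of_le_one_right hc₀ hc)
  have hscale : c₀ / 2 * (1 + p) = c₀ * c * s := by linear_combination -c₀ * hcs
  convert hmem using 1
  rw [fillingMap, hscale]
  refine Prod.ext ?_ ?_ <;> dsimp only <;> push_cast
  · ring
  · linear_combination c₀ ^ 3 * c ^ 3 * s * v ^ 3 * σ (p * v ^ 2) * E (p * v ^ 2) * hs

theorem fillingMap_mem_polyHull2 (hc₀ : 0 ≤ c₀) (hσ : DifferentiableOn ℂ σ (ball 0 r))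
    (hE : DifferentiableOn ℂ E (ball 0 r))
    (h : ∀ q ∈ ball 0 r, ∀ θ, θ ^ 2 = q * σ q ^ 2 → ∀ c : ℝ, |c| ≤ c₀ →
      (c * (θ * q), c ^ 3 * (θ * (q * E q))) ∈ polyHull2 K)
    (hp : ‖p‖ ≤ 1) (hv : ‖v‖ ^ 2 < r) : fillingMap c₀ σ E (p, v) ∈ polyHull2 K := by
  have hcl : closure (ball (0 : ℂ) 1) = closedBall 0 1 := closure_ball 0 one_ne_zero
  have hmaps : Set.MapsTo (fun p => p * v ^ 2) (closure (ball 0 1)) (ball 0 r) := by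
    intro p hp
    rw [hcl, mem_closedBall_zero_iff] at hp
    rw [mem_ball_zero_iff, norm_mul, norm_pow]
    exact (mul_le_of_le_one_left (sq_nonneg _) hp).trans_lt hv
  have hσ' := hσ.comp (by fun_prop) hmaps
  have hE' := hE.comp (by fun_prop) hmaps
  simp only [Function.comp_def] at hσ' hE'
  refine mem_polyHull2_of_disc (f := fun p => (fillingMap c₀ σ E (p, v)).1)
    (g := fun p => (fillingMap c₀ σ E (p, v)).2) isBounded_ball
    (DifferentiableOn.diffContOnCl ?_) (DifferentiableOn.diffContOnCl ?_) (fun p hp => ?_)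
    (by rwa [hcl, mem_closedBall_zero_iff])
  · simp only [fillingMap]
    fun_prop
  · simp only [fillingMap]
    fun_prop
  · rw [frontier_ball _ one_ne_zero, mem_sphere_zero_iff_norm] at hp
    exact fillingMap_mem_polyHull2_of_norm_eq_one hc₀ h hp hv

theorem map_nhds_fillingMap (hc₀ : c₀ ≠ 0) (hσ : AnalyticAt ℂ σ 0) (hE : AnalyticAt ℂ E 0)
    (hσ0 : σ 0 ≠ 0) (hE0 : E 0 ≠ 0) (hv : v ≠ 0) :
    map (fillingMap c₀ σ E) (𝓝 (0, v)) = 𝓝 (0, (c₀ / 2) ^ 3 * σ 0 * E 0 * v ^ 3) := by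
  have hκ : (c₀ / 2 : ℂ) ^ 3 * σ 0 * E 0 ≠ 0 := by simp [hc₀, hσ0, hE0]
  have hfst : AnalyticAt ℂ (fun x : ℂ × ℂ => x.1) (0, v) := analyticAt_fst
  have hsnd : AnalyticAt ℂ (fun x : ℂ × ℂ => x.2) (0, v) := analyticAt_snd
  have hq : AnalyticAt ℂ (fun x : ℂ × ℂ => x.1 * x.2 ^ 2) (0, v) := by fun_prop
  have hσ' : AnalyticAt ℂ (fun x : ℂ × ℂ => σ (x.1 * x.2 ^ 2)) (0, v) :=
    hσ.comp_of_eq hq (by simp)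
  have hE' : AnalyticAt ℂ (fun x : ℂ × ℂ => E (x.1 * x.2 ^ 2)) (0, v) :=
    hE.comp_of_eq hq (by simp)
  have hlin : AnalyticAt ℂ (fun x : ℂ × ℂ => (c₀ / 2 : ℂ) * (1 + x.1)) (0, v) := by fun_prop
  have hh := (hlin.mul (hsnd.pow 3)).mul hσ'
  have hW := (((hlin.pow 3).mul (hsnd.pow 3)).mul hσ').mul hE'
  have hfiber : ∀ y, (fillingMap c₀ σ E (0, y)).2 = (c₀ / 2) ^ 3 * σ 0 * E 0 * y ^ 3 := by
    intro y
    simp only [fillingMap, add_zero, mul_one, zero_mul]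
    ring
  have hderiv : HasDerivAt (fun y => (fillingMap c₀ σ E (0, y)).2)
      ((c₀ / 2) ^ 3 * σ 0 * E 0 * ((3 : ℕ) * v ^ 2)) v := by
    simpa only [hfiber] using (hasDerivAt_pow 3 v).const_mul _
  rw [← hfiber]
  exact map_nhds_fst_mul_prodMk hh.hasStrictFDerivAt hW.hasStrictFDerivAt
    (by simp [hc₀, hσ0, hv]) hderiv (mul_ne_zero hκ (by simp [hv]))

theorem polyHull2_mem_nhds_zero_of_smul_double_cover {D : ℂ → ℂ} (hE : AnalyticAt ℂ E 0)
    (hD : AnalyticAt ℂ D 0) (hE0 : E 0 ≠ 0) (hD0 : D 0 ≠ 0) (hc₀ : 0 < c₀)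
    (h : ∀ᶠ q in 𝓝 0, ∀ θ, θ ^ 2 = q * D q → ∀ c : ℝ, |c| ≤ c₀ →
      (c * (θ * q), c ^ 3 * (θ * (q * E q))) ∈ polyHull2 K) :
    polyHull2 K ∈ 𝓝 0 := by
  obtain ⟨σ, hσ, hσD⟩ := exists_analyticAt_pow_eq two_ne_zero hD hD0
  have hσ0 : σ 0 ≠ 0 := fun h0 => hD0 (by rw [← hσD, h0, zero_pow two_ne_zero])
  obtain ⟨r, hr, hball⟩ := eventually_nhds_iff_ball.1
    (h.and (hσ.eventually_analyticAt.and hE.eventually_analyticAt))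
  set κ : ℂ := (c₀ / 2) ^ 3 * σ 0 * E 0 with hκ
  have hκ0 : κ ≠ 0 := by simp [hκ, hc₀.ne', hσ0, hE0]
  have hfill : ∀ v : ℂ, v ≠ 0 → ‖v‖ ^ 2 < r → polyHull2 K ∈ 𝓝 (0, κ * v ^ 3) := by
    intro v hv0 hv
    have hev : ∀ᶠ x : ℂ × ℂ in 𝓝 (0, v), ‖x.1‖ < 1 ∧ ‖x.2‖ ^ 2 < r :=
      (ContinuousAt.eventually_lt (by fun_prop) continuousAt_const (by simp)).and
        (ContinuousAt.eventually_lt (by fun_prop) continuousAt_const hv)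
    rw [← map_nhds_fillingMap hc₀.ne' hσ hE hσ0 hE0 hv0]
    refine mem_map.2 (hev.mono fun x hx => fillingMap_mem_polyHull2 hc₀.le
      (fun q hq => (hball q hq).2.1.differentiableAt.differentiableWithinAt)
      (fun q hq => (hball q hq).2.2.differentiableAt.differentiableWithinAt)
      (fun q hq θ hθ => (hball q hq).1 θ (by rw [hθ, hσD])) hx.1.le hx.2)
  obtain ⟨ρ, hρ, hρr⟩ : ∃ ρ > 0, ρ ^ 2 < r :=
    ⟨√(r / 2), by positivity, by rw [Real.sq_sqrt (by positivity)]; linarith⟩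
  refine polyHull2_mem_nhds_zero (r := ‖κ‖ * ρ ^ 3) (by positivity) fun w hw => ?_
  obtain ⟨v, hv⟩ := IsAlgClosed.exists_pow_nat_eq (w / κ) three_pos
  have hvρ : ‖v‖ = ρ := by
    rw [← pow_left_inj₀ (norm_nonneg v) hρ.le three_ne_zero, ← norm_pow, hv, norm_div,
      mem_sphere_zero_iff_norm.1 hw, mul_div_cancel_left₀ _ (norm_ne_zero_iff.2 hκ0)]
  rw [← mul_div_cancel₀ w hκ0, ← hv]
  exact hfill v (norm_pos_iff.1 (hvρ ▸ hρ)) (hvρ ▸ hρr)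

end Filling

/-- for `0 < t < √3/2` and every `δ > 0`, the polynomially convex hull of
`S_t ∩ B̄(0;δ)` contains a nonempty open ball centred at the origin. -/
theorem stmt_8 (t : ℝ) (ht0 : 0 < t) (ht1 : t < Real.sqrt 3 / 2) (δ : ℝ) (hδ : 0 < δ) :
    ∃ ρ > (0 : ℝ), eOpenBall ρ ⊆ polyHull2 (Sset t ∩ eClosedBall δ) := by
  obtain ⟨E, D, c₀, hE, hD, hE0, hD0, hc₀, h⟩ := exists_forall_smul_mem_polyHull2 ht0 ht1 hδ
  exact exists_eOpenBall_subset
    (polyHull2_mem_nhds_zero_of_smul_double_cover hE hD hE0 hD0 hc₀ h)
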